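/- arXiv:1304.7694 — 3 statements merged into one kernel-verified Lean document; each statement's English description precedes it below -/
import Mathlib

section
/- Let β > 0 and let u_4 : ℝ → ℝ be the quadratic utility function u_4(t) = (β/2)t² − t for t ≤ 1/β and u_4(t) = −1/(2β) for t > 1/β. Then for every γ > 0 and every t ∈ ℝ, Prox_{γ u_4}(t) = (t + γ)/(1 + γβ) if t ≤ 1/β, and Prox_{γ u_4}(t) = t if t > 1/β. -/
/-!
With `m = (1 / β - s)⁺`, completing the square gives `u₄ s = (β / 2) * m ^ 2 - 1 / (2 * β)`, so
`-(β * m)` is a subgradient of `u₄` at `s`. A point `p` is the unique minimizer as soon as `t - p`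
is a subgradient of `γ u₄` at `p`, the quadratic term making the minimum strict, so it suffices
that the stated point satisfies `t - p = -(γ * β * (1 / β - p)⁺)`.
-/

section Proximal

variable {E : Type*} [NormedAddCommGroup E] [InnerProductSpace ℝ E] {f : E → ℝ} {g x p : E}

/-- `g` is a subgradient of the finite-valued function `f` at `p`, in the sense of convex
analysis; vectors are identified with functionals through the inner product. -/
def HasSubgradientAt (f : E → ℝ) (g p : E) : Prop :=
  ∀ y, f p + inner ℝ g (y - p) ≤ f y

/-- `p = Prox_f x`: the point `p` is the unique minimizer of `y ↦ f y + ‖y - x‖² / 2`. Uniqueness is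
encoded by a strict inequality at every other point. -/
def IsProx (f : E → ℝ) (x p : E) : Prop :=
  ∀ y, y ≠ p → f p + 1 / 2 * ‖p - x‖ ^ 2 < f y + 1 / 2 * ‖y - x‖ ^ 2

theorem HasSubgradientAt.const_smul (h : HasSubgradientAt f g p) {c : ℝ} (hc : 0 ≤ c) :
    HasSubgradientAt (c • f) (c • g) p := fun y ↦ by
  have hy := mul_le_mul_of_nonneg_left (h y) hc
  rwa [mul_add, ← real_inner_smul_left] at hy

theorem HasSubgradientAt.isProx (h : HasSubgradientAt f (x - p) p) : IsProx f x p := fun y hy ↦ by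
  have expand : ‖y - x‖ ^ 2 = ‖y - p‖ ^ 2 - 2 * inner ℝ (x - p) (y - p) + ‖p - x‖ ^ 2 := by
    rw [← sub_sub_sub_cancel_right y x p, norm_sub_sq_real, real_inner_comm, norm_sub_rev x p]
  have gap : 0 < ‖y - p‖ ^ 2 := pow_pos (norm_pos_iff.2 (sub_ne_zero.2 hy)) 2
  linarith [h y]

end Proximal

theorem sq_posPart_add_le {R : Type*} [CommRing R] [LinearOrder R] [IsStrictOrderedRing R]
    (a b : R) : a⁺ ^ 2 + 2 * a⁺ * (b - a) ≤ b⁺ ^ 2 := by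
  have mul_self_eq : a⁺ * a = a⁺ ^ 2 := by
    rcases le_total a 0 with ha | ha
    · simp [posPart_eq_zero.2 ha]
    · rw [posPart_eq_self.2 ha, sq]
  have mul_le : a⁺ * b ≤ a⁺ * b⁺ := mul_le_mul_of_nonneg_left (le_posPart b) (posPart_nonneg a)
  linarith [sq_nonneg (a⁺ - b⁺)]

section QuadraticUtility

variable {β γ : ℝ}

/-- The quadratic utility `u₄` with parameter `β`, quadratic up to its minimizer `1 / β` and
constant afterwards. -/
noncomputable def quadraticUtility (β s : ℝ) : ℝ :=
  if s ≤ 1 / β then (β / 2) * s ^ 2 - s else -(1 / (2 * β))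

/-- The closed form of the proximal point of `γ • quadraticUtility β` at `t`. -/
noncomputable def quadraticUtilityProx (β γ t : ℝ) : ℝ :=
  if t ≤ 1 / β then (t + γ) / (1 + γ * β) else t

theorem quadraticUtility_eq_sq_posPart (hβ : β ≠ 0) (s : ℝ) :
    quadraticUtility β s = β / 2 * (1 / β - s)⁺ ^ 2 - 1 / (2 * β) := by
  unfold quadraticUtility
  split_ifs with hs
  · rw [posPart_eq_self.2 (sub_nonneg.2 hs)]
    field
  · rw [posPart_eq_zero.2 (sub_nonpos.2 (le_of_not_ge hs))]
    ring

theorem hasSubgradientAt_quadraticUtility (hβ : 0 < β) (p : ℝ) :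
    HasSubgradientAt (quadraticUtility β) (-(β * (1 / β - p)⁺)) p := fun y ↦ by
  have key := mul_le_mul_of_nonneg_left (sq_posPart_add_le (1 / β - p) (1 / β - y))
    (half_pos hβ).le
  rw [quadraticUtility_eq_sq_posPart hβ.ne', quadraticUtility_eq_sq_posPart hβ.ne',
    RCLike.inner_apply, conj_trivial]
  linarith

theorem quadraticUtilityProx_le (hβ : 0 < β) (hγ : 0 ≤ γ) {t : ℝ} (ht : t ≤ 1 / β) :
    quadraticUtilityProx β γ t ≤ 1 / β := by
  have mul_le_one : t * β ≤ 1 := (le_div_iff₀ hβ).1 ht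
  rw [quadraticUtilityProx, if_pos ht, div_le_div_iff₀ (by positivity) hβ]
  linarith

theorem sub_quadraticUtilityProx (hβ : 0 < β) (hγ : 0 ≤ γ) (t : ℝ) :
    t - quadraticUtilityProx β γ t = γ * -(β * (1 / β - quadraticUtilityProx β γ t)⁺) := by
  by_cases ht : t ≤ 1 / β
  · have denom_ne_zero : 1 + γ * β ≠ 0 := by positivity
    rw [posPart_eq_self.2 (sub_nonneg.2 (quadraticUtilityProx_le hβ hγ ht)),
      quadraticUtilityProx, if_pos ht]
    field
  · rw [quadraticUtilityProx, if_neg ht, posPart_eq_zero.2 (sub_nonpos.2 (le_of_not_ge ht))]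
    ring

theorem isProx_quadraticUtility (hβ : 0 < β) (hγ : 0 ≤ γ) (t : ℝ) :
    IsProx (γ • quadraticUtility β) t (quadraticUtilityProx β γ t) := by
  apply HasSubgradientAt.isProx
  rw [sub_quadraticUtilityProx hβ hγ]
  exact (hasSubgradientAt_quadraticUtility hβ _).const_smul hγ

end QuadraticUtility

/-- Proximal point of the quadratic utility `u₄`: for `γ > 0`,
`Prox_{γu₄}(t) = (t + γ)/(1 + γβ)` if `t ≤ 1/β` and `Prox_{γu₄}(t) = t` if `t > 1/β`,
i.e. the stated point is the unique minimizer of `y ↦ γ u₄(y) + (1/2)(y − t)²`. -/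
theorem statement7 (β : ℝ) (hβ : 0 < β)
    (u₄ : ℝ → ℝ)
    (hu₄ : ∀ s : ℝ, u₄ s = if s ≤ 1 / β then (β / 2) * s ^ 2 - s else -(1 / (2 * β)))
    (γ : ℝ) (hγ : 0 < γ) (t : ℝ) :
    ∀ y : ℝ, y ≠ (if t ≤ 1 / β then (t + γ) / (1 + γ * β) else t) →
      γ * u₄ (if t ≤ 1 / β then (t + γ) / (1 + γ * β) else t) +
          (1 / 2) * ((if t ≤ 1 / β then (t + γ) / (1 + γ * β) else t) - t) ^ 2 <
        γ * u₄ y + (1 / 2) * (y - t) ^ 2 := by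
  obtain rfl : u₄ = quadraticUtility β := funext hu₄
  intro y hy
  have prox := isProx_quadraticUtility hβ hγ.le t y hy
  rwa [Real.norm_eq_abs, Real.norm_eq_abs, sq_abs, sq_abs] at prox
end

section
/- Let θ > 0 and let u_5 : ℝ → ℝ ∪ {+∞} be the logarithmic utility function u_5(t) = −θ ln(1 + t/θ) for t > −θ and u_5(t) = +∞ for t ≤ −θ. Then for every γ > 0 and every t ∈ ℝ, Prox_{γ u_5}(t) = (t − θ)/2 + √( (θ − t)²/4 + θ(γ + t) ). -/
/-!
A subgradient `g` of `f` at `p` makes `p` the proximal point of `p + γ g`, since expanding the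
square gives `γ f(y) + ½‖y - x‖² ≥ γ f(p) + ½‖p - x‖² + ½‖y - p‖²` for `x = p + γ g`. The
logarithmic utility has slope `-θ/(θ + p)` at `p > -θ`, so `p` is the proximal point of `t` as soon
as `(p - t)(θ + p) = γθ`. The radicand equals `((θ + t)/2)² + θγ`, whence the larger root of this
quadratic equation is the stated one, and it exceeds `-θ`.
-/

section Subgradient

variable {E : Type*} [NormedAddCommGroup E] [InnerProductSpace ℝ E]

/-- `g` is a subgradient at `p` of the extended-real-valued function `f`. -/
def IsSubgradientAt (f : E → EReal) (g p : E) : Prop :=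
  ∀ y, f p + (inner ℝ g (y - p) : ℝ) ≤ f y

/-- `p` is the proximal point `Prox_{γf}(x)`. Existence and uniqueness of the minimizer are encoded
together by strict inequality against every competitor. -/
def IsUniqueProx (γ : ℝ) (f : E → EReal) (x p : E) : Prop :=
  ∀ y, y ≠ p →
    (γ : EReal) * f p + (1 / 2 * ‖p - x‖ ^ 2 : ℝ) < (γ : EReal) * f y + (1 / 2 * ‖y - x‖ ^ 2 : ℝ)

theorem half_norm_sub_add_smul_sq (γ : ℝ) (g p y : E) :
    1 / 2 * ‖y - (p + γ • g)‖ ^ 2 =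
      1 / 2 * ‖p - (p + γ • g)‖ ^ 2 + 1 / 2 * ‖y - p‖ ^ 2 - γ * inner ℝ g (y - p) := by
  rw [← sub_sub, norm_sub_sq_real, sub_add_cancel_left, norm_neg, real_inner_smul_right,
    real_inner_comm]
  ring

theorem IsSubgradientAt.isUniqueProx {f : E → EReal} {g p : E} {γ : ℝ}
    (hg : IsSubgradientAt f g p) (hγ : 0 ≤ γ) (hbot : f p ≠ ⊥) (htop : f p ≠ ⊤) :
    IsUniqueProx γ f (p + γ • g) p := by
  intro y hy
  have hsub := hg y
  lift f p to ℝ using ⟨htop, hbot⟩ with a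
  have hdist : 0 < ‖y - p‖ ^ 2 := pow_pos (norm_pos_iff.mpr (sub_ne_zero.mpr hy)) 2
  calc (γ : EReal) * a + (1 / 2 * ‖p - (p + γ • g)‖ ^ 2 : ℝ)
      < γ * (a + (inner ℝ g (y - p) : ℝ)) + (1 / 2 * ‖y - (p + γ • g)‖ ^ 2 : ℝ) := by
        norm_cast
        linarith [half_norm_sub_add_smul_sq γ g p y]
    _ ≤ γ * f y + (1 / 2 * ‖y - (p + γ • g)‖ ^ 2 : ℝ) := by
        gcongr

theorem isUniqueProx_real_iff {γ : ℝ} {f : ℝ → EReal} {x p : ℝ} :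
    IsUniqueProx γ f x p ↔ ∀ y, y ≠ p →
      (γ : EReal) * f p + (1 / 2 * (p - x) ^ 2 : ℝ) <
        (γ : EReal) * f y + (1 / 2 * (y - x) ^ 2 : ℝ) := by
  simp only [IsUniqueProx, Real.norm_eq_abs, sq_abs]

end Subgradient

theorem log_le_log_add_sub_div {x y : ℝ} (hx : 0 < x) (hy : 0 < y) :
    Real.log y ≤ Real.log x + (y - x) / x := by
  have h := Real.log_le_sub_one_of_pos (div_pos hy hx)
  rw [Real.log_div hy.ne' hx.ne', div_sub_one hx.ne'] at h
  linarith

/-- The logarithmic utility `u₅` of parameter `θ`, infinite outside `(-θ, ∞)`. -/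
noncomputable def logUtility (θ s : ℝ) : EReal :=
  if -θ < s then ((-θ * Real.log (1 + s / θ) : ℝ) : EReal) else ⊤

theorem logUtility_of_neg_lt {θ s : ℝ} (hs : -θ < s) :
    logUtility θ s = ((-θ * Real.log (1 + s / θ) : ℝ) : EReal) :=
  if_pos hs

theorem logUtility_of_le_neg {θ s : ℝ} (hs : s ≤ -θ) : logUtility θ s = ⊤ :=
  if_neg hs.not_gt

theorem isSubgradientAt_logUtility {θ p : ℝ} (hθ : 0 < θ) (hp : -θ < p) :
    IsSubgradientAt (logUtility θ) (-θ / (θ + p)) p := by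
  intro y
  rcases lt_or_ge (-θ) y with hy | hy
  · have one_add_div_pos {s : ℝ} (hs : -θ < s) : 0 < 1 + s / θ := by
      rw [one_add_div hθ.ne']
      exact div_pos (by linarith) hθ
    have tangent := log_le_log_add_sub_div (one_add_div_pos hp) (one_add_div_pos hy)
    have slope : (1 + y / θ - (1 + p / θ)) / (1 + p / θ) = (y - p) / (θ + p) := by
      field_simp
      ring
    rw [slope] at tangent
    rw [logUtility_of_neg_lt hp, logUtility_of_neg_lt hy, Real.inner_apply]
    norm_cast
    calc -θ * Real.log (1 + p / θ) + -θ / (θ + p) * (y - p)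
        = -θ * (Real.log (1 + p / θ) + (y - p) / (θ + p)) := by ring
      _ ≤ -θ * Real.log (1 + y / θ) :=
        mul_le_mul_of_nonpos_left tangent (neg_nonpos.mpr hθ.le)
  · rw [logUtility_of_le_neg hy]
    exact le_top

/-- The candidate for the proximal point of `t`, the larger root `p` of `(p - t)(θ + p) = γθ`. -/
noncomputable def logUtilityProx (θ γ t : ℝ) : ℝ :=
  (t - θ) / 2 + Real.sqrt ((θ - t) ^ 2 / 4 + θ * (γ + t))

theorem logUtilityProx_eq_sqrt (θ γ t : ℝ) :
    logUtilityProx θ γ t = (t - θ) / 2 + Real.sqrt (((θ + t) / 2) ^ 2 + θ * γ) := by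
  rw [logUtilityProx]
  ring_nf

theorem neg_lt_logUtilityProx {θ γ : ℝ} (hθγ : 0 < θ * γ) (t : ℝ) :
    -θ < logUtilityProx θ γ t := by
  have h : |(θ + t) / 2| < Real.sqrt (((θ + t) / 2) ^ 2 + θ * γ) :=
    Real.lt_sqrt_of_sq_lt (by rw [sq_abs]; linarith)
  rw [logUtilityProx_eq_sqrt]
  linarith [neg_abs_le ((θ + t) / 2)]

theorem logUtilityProx_sub_mul_add {θ γ : ℝ} (hθγ : 0 ≤ θ * γ) (t : ℝ) :
    (logUtilityProx θ γ t - t) * (θ + logUtilityProx θ γ t) = θ * γ := by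
  rw [logUtilityProx_eq_sqrt]
  linear_combination Real.sq_sqrt (add_nonneg (sq_nonneg ((θ + t) / 2)) hθγ)

theorem isUniqueProx_logUtility {θ γ : ℝ} (hθ : 0 < θ) (hγ : 0 < γ) (t : ℝ) :
    IsUniqueProx γ (logUtility θ) t (logUtilityProx θ γ t) := by
  have hp := neg_lt_logUtilityProx (mul_pos hθ hγ) t
  have stationary := logUtilityProx_sub_mul_add (mul_pos hθ hγ).le t
  set p := logUtilityProx θ γ t
  have hpθ : θ + p ≠ 0 := by linarith
  have ht : p + γ • (-θ / (θ + p)) = t := by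
    rw [smul_eq_mul]
    field_simp
    linear_combination stationary
  have hfin := logUtility_of_neg_lt hp
  rw [← ht]
  exact (isSubgradientAt_logUtility hθ hp).isUniqueProx hγ.le
    (hfin ▸ EReal.coe_ne_bot _) (hfin ▸ EReal.coe_ne_top _)

/-- Proximal point of the logarithmic utility `u₅` (with `u₅(t) = −θ ln(1 + t/θ)` for `t > −θ`
and `u₅(t) = +∞` otherwise): for `γ > 0`,
`Prox_{γu₅}(t) = (t − θ)/2 + √((θ − t)²/4 + θ(γ + t))`, i.e. this point is the unique
minimizer of `y ↦ γ u₅(y) + (1/2)(y − t)²` (with extended-real values). -/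
theorem statement8 (θ : ℝ) (hθ : 0 < θ)
    (u₅ : ℝ → EReal)
    (hu₅ : ∀ s : ℝ, u₅ s =
      if -θ < s then (((-θ) * Real.log (1 + s / θ) : ℝ) : EReal) else (⊤ : EReal))
    (γ : ℝ) (hγ : 0 < γ) (t : ℝ) :
    ∀ y : ℝ, y ≠ (t - θ) / 2 + Real.sqrt ((θ - t) ^ 2 / 4 + θ * (γ + t)) →
      (γ : EReal) * u₅ ((t - θ) / 2 + Real.sqrt ((θ - t) ^ 2 / 4 + θ * (γ + t))) +
          (((1 / 2) * (((t - θ) / 2 + Real.sqrt ((θ - t) ^ 2 / 4 + θ * (γ + t))) - t) ^ 2 : ℝ) :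
            EReal) <
        (γ : EReal) * u₅ y + (((1 / 2) * (y - t) ^ 2 : ℝ) : EReal) := by
  obtain rfl : u₅ = logUtility θ := funext hu₅
  exact isUniqueProx_real_iff.mp (isUniqueProx_logUtility hθ hγ t)
end

section
/- Let n ≥ 1, let p = (p_1,…,p_n) be a probability vector (p_i ≥ 0 for all i and Σ_{i=1}^n p_i = 1), let α ∈ (0,1), and let X ∈ ℝⁿ be a random variable on the finite probability space with P({i}) = p_i. Then the Conditional Value-at-Risk at level α admits the dual representation CVaR_α(X) := inf_{λ∈ℝ} { λ + (1/(1−α)) Σ_{i=1}^n p_i [X_i + λ]_− } = sup_{q ∈ Q} ( −qᵀX ), where Q = { q ∈ ℝⁿ : Σ_{i=1}^n q_i = 1 and 0 ≤ q_i ≤ p_i/(1−α) for i = 1,…,n }. -/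
/-!
Put `w = p / (1 - α)`, so that `1 ≤ ∑ i, w i`. If `∑ i, q i = 1`, then
`-∑ i, q i * X i = t + ∑ i, q i * (-(X i + t))` for every `t`, and replacing `q i` by `w i` and
`-(X i + t)` by its positive part gives weak duality. Equality holds as soon as `q i = w i` where
`t < -X i` and `q i = 0` where `-X i < t`. Such a `q` of total mass `1` exists when `t` is an upper
quantile of `-X` under the weights `w`: the mass of `{t < -X}` is at most `1` and that of
`{t ≤ -X}` is at least `1`, and the atom `{t = -X}` is charged just enough to make up the
difference.
-/

section

variable {ι : Type*} [Fintype ι]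

theorem exists_sum_filter_lt_le_and_le_sum_filter_le {β M : Type*} [LinearOrder β]
    [AddCommMonoid M] [LinearOrder M] (w : ι → M) (Y : ι → β) {c : M} (hc : 0 < c)
    (hw : c ≤ ∑ i, w i) :
    ∃ t, ∑ i with t < Y i, w i ≤ c ∧ c ≤ ∑ i with t ≤ Y i, w i := by
  have nonempty_of_lt {s : Finset ι} (h : c < ∑ i ∈ s, w i) : s.Nonempty :=
    Finset.nonempty_of_sum_ne_zero (hc.trans h).ne'
  have univ_nonempty : (Finset.univ : Finset ι).Nonempty :=
    Finset.nonempty_of_sum_ne_zero (hc.trans_le hw).ne'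
  let heavy : Finset ι := {k | c ≤ ∑ i with Y k ≤ Y i, w i}
  have heavy_nonempty : heavy.Nonempty := by
    obtain ⟨k, -, hk⟩ := Finset.univ.exists_min_image Y univ_nonempty
    refine ⟨k, Finset.mem_filter.2 ⟨Finset.mem_univ k, ?_⟩⟩
    rwa [Finset.filter_true_of_mem hk]
  obtain ⟨k, hk, k_max⟩ := heavy.exists_max_image Y heavy_nonempty
  refine ⟨Y k, le_of_not_gt fun hlt => ?_, (Finset.mem_filter.1 hk).2⟩
  -- Otherwise the next larger value of `Y` would also bound a heavy upper set.
  obtain ⟨m, hm, m_min⟩ := Finset.exists_min_image _ Y (nonempty_of_lt hlt)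
  simp only [Finset.mem_filter, Finset.mem_univ, true_and] at hm m_min
  have upper_eq (i : ι) : Y m ≤ Y i ↔ Y k < Y i := ⟨hm.trans_le, m_min i⟩
  have m_heavy : m ∈ heavy := by
    simpa only [heavy, Finset.mem_filter, Finset.mem_univ, true_and, upper_eq] using hlt.le
  exact (k_max m m_heavy).not_gt hm

theorem exists_mem_Icc_sum_eq {lo hi : ι → ℝ} {c : ℝ} (h : lo ≤ hi) (hlo : ∑ i, lo i ≤ c)
    (hhi : c ≤ ∑ i, hi i) : ∃ q ∈ Set.Icc lo hi, ∑ i, q i = c :=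
  (convex_Icc lo hi).isPreconnected.intermediate_value (Set.left_mem_Icc.2 h)
    (Set.right_mem_Icc.2 h) (f := fun q => ∑ i, q i) (by fun_prop) ⟨hlo, hhi⟩

/-- The Rockafellar–Uryasev function of `X`, whose infimum over `t` is the Conditional
Value-at-Risk. The factor `1 / (1 - α)` is absorbed into the weights `w`. -/
def rockafellarUryasev (w X : ι → ℝ) (t : ℝ) : ℝ :=
  t + ∑ i, w i * max (-(X i + t)) 0

/-- The risk envelope of the weights `w`: the probability vectors dominated by `w`, which are the
feasible points of the dual problem. -/
def riskEnvelope (w : ι → ℝ) : Set (ι → ℝ) :=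
  {q | ∑ i, q i = 1 ∧ ∀ i, 0 ≤ q i ∧ q i ≤ w i}

theorem neg_sum_mul_eq_add_sum_mul_neg_add {q : ι → ℝ} (hq : ∑ i, q i = 1) (X : ι → ℝ) (t : ℝ) :
    -∑ i, q i * X i = t + ∑ i, q i * (-(X i + t)) := by
  simp only [mul_neg, mul_add, Finset.sum_neg_distrib, Finset.sum_add_distrib, ← Finset.sum_mul, hq]
  ring

theorem neg_sum_mul_le_rockafellarUryasev {w q : ι → ℝ} (hq : q ∈ riskEnvelope w) (X : ι → ℝ)
    (t : ℝ) : -∑ i, q i * X i ≤ rockafellarUryasev w X t := by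
  obtain ⟨hq_sum, hq_mem⟩ := hq
  rw [neg_sum_mul_eq_add_sum_mul_neg_add hq_sum X t, rockafellarUryasev]
  refine add_le_add_right (Finset.sum_le_sum fun i _ => ?_) t
  obtain ⟨hq_nonneg, hq_le⟩ := hq_mem i
  calc q i * (-(X i + t)) ≤ q i * max (-(X i + t)) 0 := by gcongr; exact le_max_left _ _
    _ ≤ w i * max (-(X i + t)) 0 := by gcongr

theorem rockafellarUryasev_eq_of_complementary_slackness {w q X : ι → ℝ} {t : ℝ}
    (hq : ∑ i, q i = 1) (hlt : ∀ i, t < -X i → q i = w i) (hgt : ∀ i, -X i < t → q i = 0) :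
    rockafellarUryasev w X t = -∑ i, q i * X i := by
  rw [neg_sum_mul_eq_add_sum_mul_neg_add hq X t, rockafellarUryasev]
  congr! 2 with i
  rcases lt_trichotomy t (-X i) with h | h | h
  · rw [hlt i h, max_eq_left (by linarith)]
  · simp [h]
  · rw [hgt i h, max_eq_right (by linarith), mul_zero, zero_mul]

theorem exists_rockafellarUryasev_eq_neg_sum_mul {w : ι → ℝ} (hw : 0 ≤ w) (hw_sum : 1 ≤ ∑ i, w i)
    (X : ι → ℝ) : ∃ t, ∃ q ∈ riskEnvelope w, rockafellarUryasev w X t = -∑ i, q i * X i := by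
  obtain ⟨t, hlt, hle⟩ :=
    exists_sum_filter_lt_le_and_le_sum_filter_le w (fun i => -X i) one_pos hw_sum
  let lo : ι → ℝ := {i | t < -X i}.indicator w
  let hi : ι → ℝ := {i | t ≤ -X i}.indicator w
  have lo_le_hi : lo ≤ hi :=
    Set.indicator_le_indicator_of_subset (Set.ofPred_subset_ofPred.2 fun _ => le_of_lt) hw
  have lo_nonneg : 0 ≤ lo := Set.indicator_nonneg fun i _ => hw i
  have hi_le : hi ≤ w := Set.indicator_le_self' fun i _ => hw i
  obtain ⟨q, ⟨lo_le, le_hi⟩, hq_sum⟩ : ∃ q ∈ Set.Icc lo hi, ∑ i, q i = 1 := by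
    refine exists_mem_Icc_sum_eq lo_le_hi ?_ ?_
    · simpa only [lo, Set.indicator_apply, Set.mem_ofPred_eq, Finset.sum_filter] using hlt
    · simpa only [hi, Set.indicator_apply, Set.mem_ofPred_eq, Finset.sum_filter] using hle
  have q_nonneg : 0 ≤ q := lo_nonneg.trans lo_le
  have q_le : q ≤ w := le_hi.trans hi_le
  refine ⟨t, q, ⟨hq_sum, fun i => ⟨q_nonneg i, q_le i⟩⟩,
    rockafellarUryasev_eq_of_complementary_slackness hq_sum (fun i h => ?_) fun i h => ?_⟩
  · have lo_eq : lo i = w i := Set.indicator_of_mem (s := {i | t < -X i}) h w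
    exact (q_le i).antisymm (lo_eq.ge.trans (lo_le i))
  · have hi_eq : hi i = 0 := Set.indicator_of_notMem (s := {i | t ≤ -X i}) h.not_ge w
    exact ((le_hi i).trans hi_eq.le).antisymm (q_nonneg i)

theorem statement14_general {w : ι → ℝ} (hw : 0 ≤ w) (hw_sum : 1 ≤ ∑ i, w i) (X : ι → ℝ) :
    ⨅ t : ℝ, (rockafellarUryasev w X t : EReal) =
      ⨆ q ∈ riskEnvelope w, ((-∑ i, q i * X i : ℝ) : EReal) := by
  apply le_antisymm
  · obtain ⟨t, q, hq, h_eq⟩ := exists_rockafellarUryasev_eq_neg_sum_mul hw hw_sum X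
    exact iInf_le_of_le t (le_iSup₂_of_le q hq (EReal.coe_le_coe h_eq.le))
  · exact iSup₂_le fun q hq => le_iInf fun t =>
      EReal.coe_le_coe (neg_sum_mul_le_rockafellarUryasev hq X t)

end

/-- Dual representation of the Conditional Value-at-Risk on a finite probability space:
`CVaR_α(X) = inf_{λ∈ℝ} { λ + (1/(1−α)) ∑ᵢ pᵢ [Xᵢ + λ]₋ } = sup_{q ∈ Q} (−qᵀX)`, where
`Q = { q : ∑ᵢ qᵢ = 1, 0 ≤ qᵢ ≤ pᵢ/(1−α) }`. -/
theorem statement14 (n : ℕ) (hn : 1 ≤ n) (p : Fin n → ℝ) (hp : ∀ i, 0 ≤ p i)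
    (hsum : ∑ i, p i = 1) (α : ℝ) (hα : 0 < α) (hα' : α < 1) (X : Fin n → ℝ) :
    (⨅ lam : ℝ,
        ((lam + (1 / (1 - α)) * ∑ i, p i * max (-(X i + lam)) 0 : ℝ) : EReal)) =
      ⨆ q ∈ {q : Fin n → ℝ | (∑ i, q i = 1) ∧ ∀ i, 0 ≤ q i ∧ q i ≤ p i / (1 - α)},
        ((-(∑ i, q i * X i) : ℝ) : EReal) := by
  have one_le_sum : 1 ≤ ∑ i, p i / (1 - α) := by
    rw [← Finset.sum_div, hsum, one_le_div₀ (sub_pos.2 hα')]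
    exact sub_le_self 1 hα.le
  simpa only [rockafellarUryasev, riskEnvelope, Finset.mul_sum, ← mul_assoc, one_div_mul_eq_div]
    using statement14_general (fun i => div_nonneg (hp i) (sub_nonneg.2 hα'.le)) one_le_sum X
end
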